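/- Let n ≥ 3, λ ≥ 1, Ā > 0, and let A : ℝⁿ → Sym_n be a C¹ symmetric matrix-valued function with sup_z(|A(z)| + |DA(z)|) ≤ Ā and λ⁻¹|ξ|² ≤ A(z)ξ·ξ ≤ λ|ξ|² for all z, ξ. Fix y ∈ ℝⁿ and define F(z) = ⟨A(z)(z−y), z−y⟩^{(2−n)/2} for z ≠ y. Then there exists C > 0 depending only on n and λ such that for all 0 < ρ ≤ R and all z₁, z₂ such that the segment [z₁,z₂] is contained in {z : ρ ≤ |z−y| ≤ R}, one has |F(z₁) − F(z₂)| ≤ C(1 + ĀR)|z₁−z₂| ρ^{1−n}. -/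

import Mathlib

open Set
open scoped RealInnerProductSpace

lemma aux_norm_le {E : Type*} [NormedAddCommGroup E] [InnerProductSpace ℝ E]
    (lam : ℝ) (hlam : 1 ≤ lam) (T : E →L[ℝ] E)
    (hs : ∀ ξ η, ⟪T ξ, η⟫ = ⟪ξ, T η⟫)
    (he : ∀ ξ, lam⁻¹ * ‖ξ‖ ^ 2 ≤ ⟪T ξ, ξ⟫ ∧ ⟪T ξ, ξ⟫ ≤ lam * ‖ξ‖ ^ 2) (w : E) :
    ‖T w‖ ≤ lam * ‖w‖ := by
  have hl : 0 < lam := by linarith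
  have h1 := (he (lam • w + T w)).2
  have h2 := (he (lam • w - T w)).1
  have h3 : 0 ≤ lam⁻¹ * ‖lam • w - T w‖ ^ 2 := by positivity
  have h4 := (he w).2
  rw [norm_add_sq_real] at h1
  have h5 := hs (T w) w
  simp only [map_add, map_sub, map_smul, inner_add_left, inner_add_right, inner_sub_left,
    inner_sub_right, inner_smul_left, inner_smul_right, norm_smul, Real.norm_eq_abs,
    abs_of_pos hl, real_inner_self_eq_norm_sq, conj_trivial] at h1 h2 h5
  have h6 : ⟪w, T w⟫ = ⟪T w, w⟫ := real_inner_comm _ _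
  rw [h6] at h1
  have h7 : lam ^ 2 * ⟪T w, w⟫ ≤ lam ^ 2 * (lam * ‖w‖ ^ 2) := by gcongr
  have h8 : lam * ‖T w‖ ^ 2 ≤ lam * (lam * ‖w‖) ^ 2 := by nlinarith
  have h9 := le_of_mul_le_mul_left h8 hl
  exact (sq_le_sq₀ (norm_nonneg _) (by positivity)).1 h9

/-- Mean-value bound for the anisotropic fundamental-solution kernel
`F(z) = ⟨A(z)(z-y), z-y⟩^{(2-n)/2}` away from the pole: there is `C > 0` depending only on
`n` and `λ` such that `|F(z₁)-F(z₂)| ≤ C(1+ĀR)|z₁-z₂| ρ^{1-n}` whenever the segment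
`[z₁,z₂]` stays in the annulus `{ρ ≤ |z-y| ≤ R}`. -/
theorem anisotropic_kernel_mean_value_bound
    (n : ℕ) (hn : 3 ≤ n) (lam : ℝ) (hlam : 1 ≤ lam) :
    ∃ C > 0,
      ∀ Abar : ℝ, 0 < Abar →
      ∀ A : EuclideanSpace ℝ (Fin n) → (EuclideanSpace ℝ (Fin n) →L[ℝ] EuclideanSpace ℝ (Fin n)),
        ContDiff ℝ 1 A →
        (∀ z, ‖A z‖ + ‖fderiv ℝ A z‖ ≤ Abar) →
        (∀ z ξ η, ⟪A z ξ, η⟫ = ⟪ξ, A z η⟫) →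
        (∀ z ξ, lam⁻¹ * ‖ξ‖ ^ 2 ≤ ⟪A z ξ, ξ⟫ ∧ ⟪A z ξ, ξ⟫ ≤ lam * ‖ξ‖ ^ 2) →
      ∀ y : EuclideanSpace ℝ (Fin n), ∀ ρ R : ℝ, 0 < ρ → ρ ≤ R →
      ∀ z₁ z₂ : EuclideanSpace ℝ (Fin n),
        segment ℝ z₁ z₂ ⊆ {z | ρ ≤ ‖z - y‖ ∧ ‖z - y‖ ≤ R} →
        |⟪A z₁ (z₁ - y), z₁ - y⟫ ^ (((2 : ℝ) - n) / 2) -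
            ⟪A z₂ (z₂ - y), z₂ - y⟫ ^ (((2 : ℝ) - n) / 2)| ≤
          C * (1 + Abar * R) * ‖z₁ - z₂‖ * ρ ^ ((1 : ℝ) - n) := by
  have hl : 0 < lam := by linarith
  have hn' : (3 : ℝ) ≤ n := by exact_mod_cast hn
  refine ⟨(n : ℝ) * lam ^ ((n : ℝ) / 2) * (2 * lam), by positivity, ?_⟩
  intro Abar hAbar A hA hb hs he y ρ R hρ hR z₁ z₂ hseg
  set p : ℝ := ((2 : ℝ) - n) / 2 with hp
  have hdA : ∀ z, HasFDerivAt A (fderiv ℝ A z) z := fun z =>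
    (hA.differentiable (by norm_num) z).hasFDerivAt
  have hq : ∀ z, ∃ L : EuclideanSpace ℝ (Fin n) →L[ℝ] ℝ,
      HasFDerivAt (fun z => ⟪A z (z - y), z - y⟫) L z ∧
      ‖L‖ ≤ Abar * ‖z - y‖ ^ 2 + 2 * (lam * ‖z - y‖) := by
    intro z
    have hid : HasFDerivAt (fun z : EuclideanSpace ℝ (Fin n) => z - y)
      (ContinuousLinearMap.id ℝ _) z := (hasFDerivAt_id z).sub_const y
    refine ⟨_, ((hdA z).clm_apply hid).inner ℝ hid, ?_⟩
    refine ContinuousLinearMap.opNorm_le_bound _ (by positivity) ?_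
    intro h
    have e1 : ‖fderiv ℝ A z‖ ≤ Abar := by linarith [hb z, norm_nonneg (A z)]
    have e2 := aux_norm_le lam hlam (A z) (hs z) (he z) (z - y)
    have e3 : |⟪A z (z - y), h⟫| ≤ lam * ‖z - y‖ * ‖h‖ :=
      (abs_real_inner_le_norm _ _).trans (by gcongr)
    have e4 : |⟪fderiv ℝ A z h (z - y), z - y⟫| ≤ Abar * ‖z - y‖ ^ 2 * ‖h‖ := by
      refine (abs_real_inner_le_norm _ _).trans ?_
      have : ‖fderiv ℝ A z h (z - y)‖ ≤ Abar * ‖h‖ * ‖z - y‖ :=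
        (ContinuousLinearMap.le_opNorm _ _).trans (by
          gcongr
          exact (ContinuousLinearMap.le_opNorm _ _).trans (by gcongr))
      calc _ ≤ Abar * ‖h‖ * ‖z - y‖ * ‖z - y‖ := by gcongr
        _ = _ := by ring
    have e5 : ⟪A z h, z - y⟫ = ⟪A z (z - y), h⟫ := by
      rw [hs, real_inner_comm]
    simp [inner_add_left, e5, -map_sub]
    rw [abs_le] at *
    constructor <;> nlinarith
  choose L hL hLb using hq
  have key : ∀ z ∈ segment ℝ z₁ z₂,
      ‖(p * ⟪A z (z - y), z - y⟫ ^ (p - 1)) • L z‖ ≤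
        (n : ℝ) * lam ^ ((n : ℝ) / 2) * (2 * lam) * (1 + Abar * R) * ρ ^ ((1 : ℝ) - n) := by
    intro z hz
    obtain ⟨h1, h2⟩ := hseg hz
    have hr : 0 < ‖z - y‖ := hρ.trans_le h1
    have hLz := hLb z
    have hqz := (he z (z - y)).1
    set r := ‖z - y‖
    have hpos : 0 < lam⁻¹ * r ^ 2 := by positivity
    have g1 : ⟪A z (z - y), z - y⟫ ^ (p - 1) ≤ lam ^ ((n : ℝ) / 2) * r ^ (-(n : ℝ)) := by
      refine (Real.rpow_le_rpow_of_nonpos hpos hqz (by rw [hp]; linarith)).trans ?_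
      rw [Real.mul_rpow (by positivity) (by positivity), Real.inv_rpow hl.le, ← Real.rpow_neg hl.le,
        ← Real.rpow_natCast r 2, ← Real.rpow_mul hr.le]
      apply le_of_eq
      congr 2 <;> rw [hp] <;> push_cast <;> ring
    have g2 : |p| ≤ n := by rw [hp, abs_le]; constructor <;> linarith
    have g3 : r ^ ((1 : ℝ) - n) ≤ ρ ^ ((1 : ℝ) - n) :=
      Real.rpow_le_rpow_of_nonpos hρ h1 (by linarith)
    have g4 : r ^ (-(n : ℝ)) * r = r ^ ((1 : ℝ) - n) := by
      rw [← Real.rpow_add_one hr.ne']; congr 1; ring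
    have g0 : 0 ≤ ⟪A z (z - y), z - y⟫ ^ (p - 1) := Real.rpow_nonneg (hpos.le.trans hqz) _
    rw [norm_smul, norm_mul, Real.norm_eq_abs, Real.norm_eq_abs, abs_of_nonneg g0]
    have hAr : 0 ≤ Abar * r := by positivity
    have hAr' : Abar * r ≤ Abar * R := by gcongr
    have hR0 : 0 < R := hρ.trans_le hR
    calc _ ≤ (n : ℝ) * (lam ^ ((n : ℝ) / 2) * r ^ (-(n : ℝ))) *
          (Abar * r ^ 2 + 2 * (lam * r)) := by gcongr
      _ = (n : ℝ) * lam ^ ((n : ℝ) / 2) * (Abar * r + 2 * lam) * (r ^ (-(n : ℝ)) * r) := by ring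
      _ = (n : ℝ) * lam ^ ((n : ℝ) / 2) * (Abar * r + 2 * lam) * r ^ ((1 : ℝ) - n) := by rw [g4]
      _ ≤ (n : ℝ) * lam ^ ((n : ℝ) / 2) * (2 * lam * (1 + Abar * R)) * ρ ^ ((1 : ℝ) - n) := by
        have : Abar * r + 2 * lam ≤ 2 * lam * (1 + Abar * R) := by nlinarith
        gcongr
      _ = _ := by ring
  have hder : ∀ z ∈ segment ℝ z₁ z₂, HasFDerivWithinAt
      (fun z => ⟪A z (z - y), z - y⟫ ^ p)
      ((p * ⟪A z (z - y), z - y⟫ ^ (p - 1)) • L z) (segment ℝ z₁ z₂) z := by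
    intro z hz
    obtain ⟨h1, h2⟩ := hseg hz
    have hr : 0 < ‖z - y‖ := hρ.trans_le h1
    have hpos : 0 < lam⁻¹ * ‖z - y‖ ^ 2 := by positivity
    exact ((hL z).rpow_const (Or.inl (hpos.trans_le (he z (z - y)).1).ne')).hasFDerivWithinAt
  have := (convex_segment z₁ z₂).norm_image_sub_le_of_norm_hasFDerivWithin_le hder key
    (right_mem_segment ℝ z₁ z₂) (left_mem_segment ℝ z₁ z₂)
  rw [Real.norm_eq_abs] at this
  refine this.trans (le_of_eq ?_)
  ring
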